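/- arXiv:2402.13285 — 2 statements merged into one kernel-verified Lean document; each statement's English description precedes it below -/
import Mathlib

section
/- Practical bound with informed (Gibbs) prior: Let ω : H → ℝ be measurable with ∫_H e^{−ω} dλ ∈ (0,∞) and let P be the Gibbs prior with density proportional to e^{−ω(h)}. For any probability measure D on Z, any loss ℓ : H × Z → [0,1], any measurable parametric function μ : H × Z^m → ℝ with finite positive Gibbs normalizer, and any δ ∈ (0,1], with probability at least 1−δ over S ∼ D^m, h′ ∼ P, and h ∼ Q_S (Gibbs posterior for μ), one has kl(R_S^ℓ(h) ‖ R_D^ℓ(h)) ≤ (1/m)·[ (μ(h′,S) − ω(h′)) − (μ(h,S) − ω(h)) + ln(8√m/δ²) ]. -/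
open MeasureTheory ProbabilityTheory

/-- The true risk `R_D^ℓ(h) = E_{z∼D} ℓ(h,z)`. -/
noncomputable def trueRisk {H Z : Type*} [MeasurableSpace Z]
    (D : Measure Z) (ℓ : H → Z → ℝ) (h : H) : ℝ :=
  ∫ z, ℓ h z ∂D

/-- The empirical risk `R_S^ℓ(h) = (1/m) Σ_{i=1}^m ℓ(h,z_i)`. -/
noncomputable def empRisk {H Z : Type*} {m : ℕ}
    (ℓ : H → Z → ℝ) (h : H) (S : Fin m → Z) : ℝ :=
  (∑ i, ℓ h (S i)) / m

/-- The binary KL divergence `kl(q‖p) = q ln(q/p) + (1−q) ln((1−q)/(1−p))`. -/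
noncomputable def binKL (q p : ℝ) : ℝ :=
  q * Real.log (q / p) + (1 - q) * Real.log ((1 - q) / (1 - p))

lemma binKL_le_chi (q r : ℝ) (hq0 : 0 ≤ q) (hq1 : q ≤ 1) (hr0 : 0 < r) (hr1 : r < 1) :
    binKL q r ≤ (q - r) ^ 2 / (r * (1 - r)) := by
  have key : ∀ x y : ℝ, 0 ≤ x → 0 < y → x * Real.log (x / y) ≤ x * (x / y - 1) := by
    intro x y hx hy
    rcases hx.eq_or_lt with h | h
    · simp [← h]
    · exact mul_le_mul_of_nonneg_left (Real.log_le_sub_one_of_pos (by positivity)) hx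
  have h1 := key q r hq0 hr0
  have h2 := key (1 - q) (1 - r) (by linarith) (by linarith)
  have h3 : (q - r) ^ 2 / (r * (1 - r)) = q * (q / r - 1) + (1 - q) * ((1 - q) / (1 - r) - 1) := by
    have : 1 - r ≠ 0 := by linarith
    field_simp
    ring
  unfold binKL
  linarith

lemma sin_add_le_aux (u t d : ℝ) (hd : 0 < d) (ht : |t| ≤ d) (hu1 : 2 * d ≤ u)
    (hu2 : u ≤ Real.pi - 2 * d) : Real.sin (u + t) ≤ 3 / 2 * Real.sin u := by
  have hsu : 0 ≤ Real.sin u := Real.sin_nonneg_of_nonneg_of_le_pi (by linarith) (by linarith)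
  have hst : |Real.sin t| ≤ Real.sin d := by
    obtain ⟨h1, h2⟩ := abs_le.1 ht
    rw [abs_le, ← Real.sin_neg]
    constructor
    · exact Real.sin_le_sin_of_le_of_le_pi_div_two (by linarith) (by linarith) (by linarith)
    · exact Real.sin_le_sin_of_le_of_le_pi_div_two (by linarith) (by linarith) (by linarith)
  have hcu : |Real.cos u| ≤ Real.cos (2 * d) := by
    rw [abs_le, ← Real.cos_pi_sub]
    constructor
    · exact Real.cos_le_cos_of_nonneg_of_le_pi (by linarith) (by linarith) (by linarith)
    · exact Real.cos_le_cos_of_nonneg_of_le_pi (by linarith) (by linarith) (by linarith)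
  have hsd : 0 ≤ Real.sin d := (abs_nonneg _).trans hst
  have hc2 : Real.cos (2 * d) ≤ Real.cos d :=
    Real.cos_le_cos_of_nonneg_of_le_pi (by linarith) (by linarith) (by linarith)
  have hs2 : Real.sin (2 * d) ≤ Real.sin u := by
    apply le_of_sq_le_sq _ hsu
    have := sq_le_sq' (by linarith [abs_nonneg (Real.cos u)]) hcu
    rw [sq_abs] at this
    nlinarith [Real.sin_sq_add_cos_sq u, Real.sin_sq_add_cos_sq (2 * d)]
  rw [Real.sin_two_mul] at hs2
  rw [Real.sin_add]
  have h1 : Real.sin u * Real.cos t ≤ Real.sin u :=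
    mul_le_of_le_one_right hsu (Real.cos_le_one t)
  have h2 : Real.cos u * Real.sin t ≤ Real.cos d * Real.sin d := by
    calc Real.cos u * Real.sin t ≤ |Real.cos u * Real.sin t| := le_abs_self _
      _ = |Real.cos u| * |Real.sin t| := abs_mul _ _
      _ ≤ Real.cos d * Real.sin d :=
        mul_le_mul (hcu.trans hc2) hst (abs_nonneg _) ((abs_nonneg _).trans (hcu.trans hc2))
  linarith

/-- The angular grid. -/
noncomputable def gridPt (N j : ℕ) : ℝ := Real.sin ((2 * j + 1) * (Real.pi / (4 * N))) ^ 2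

lemma gridPt_mem (N j : ℕ) (hj : j < N) : 0 < gridPt N j ∧ gridPt N j < 1 := by
  have hN : (0:ℝ) < N := by exact_mod_cast (by omega : 0 < N)
  have hd : 0 < Real.pi / (4 * N) := by positivity
  have hj' : (j:ℝ) + 1 ≤ N := by exact_mod_cast hj
  have e : Real.pi / 2 = 2 * N * (Real.pi / (4 * N)) := by field_simp; ring
  have hlt : (2 * j + 1) * (Real.pi / (4 * N)) < Real.pi / 2 := by
    rw [e]; exact mul_lt_mul_of_pos_right (by linarith) hd
  have hp : 0 < (2 * j + 1) * (Real.pi / (4 * N)) := by positivity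
  have hs := Real.sin_pos_of_pos_of_lt_pi hp (by linarith)
  have hc := Real.cos_pos_of_mem_Ioo ⟨by linarith, hlt⟩
  unfold gridPt
  refine ⟨by positivity, ?_⟩
  nlinarith [Real.sin_sq_add_cos_sq ((2 * j + 1) * (Real.pi / (4 * N)))]

lemma exists_grid (N : ℕ) (hN : 0 < N) (q : ℝ) (hq0 : 0 ≤ q) (hq1 : q ≤ 1) :
    ∃ j < N, binKL q (gridPt N j) ≤ 9 * (Real.pi / (4 * N)) ^ 2 := by
  have hN' : (0:ℝ) < N := by exact_mod_cast hN
  set d := Real.pi / (4 * N) with hd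
  have hd0 : 0 < d := by positivity
  have e : Real.pi / 2 = 2 * N * d := by rw [hd]; field_simp; ring
  set a := Real.arcsin (Real.sqrt q) with ha
  have ha0 : 0 ≤ a := Real.arcsin_nonneg.2 (Real.sqrt_nonneg q)
  have ha1 : a ≤ Real.pi / 2 := Real.arcsin_le_pi_div_two _
  have hsa : Real.sin a ^ 2 = q := by
    rw [ha, Real.sin_arcsin (by linarith [Real.sqrt_nonneg q]) (Real.sqrt_le_one.2 hq1)]
    exact Real.sq_sqrt hq0
  obtain ⟨j, hj, hjt⟩ : ∃ j < N, |a - (2 * j + 1) * d| ≤ d := by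
    have hf := Nat.floor_le (div_nonneg ha0 (by positivity : 0 ≤ 2 * d))
    have hf2 := Nat.lt_floor_add_one (a / (2 * d))
    rw [le_div_iff₀ (by positivity)] at hf
    rw [div_lt_iff₀ (by positivity)] at hf2
    by_cases h : ⌊a / (2 * d)⌋₊ < N
    · refine ⟨_, h, ?_⟩
      rw [abs_le]; constructor <;> linarith
    · refine ⟨N - 1, by omega, ?_⟩
      have h' : (N:ℝ) ≤ ⌊a / (2 * d)⌋₊ := by exact_mod_cast not_lt.1 h
      have : (N:ℝ) * (2 * d) ≤ a := le_trans (mul_le_mul_of_nonneg_right h' (by positivity)) hf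
      rw [Nat.cast_sub hN]
      push_cast
      rw [abs_le]; constructor <;> linarith
  refine ⟨j, hj, ?_⟩
  have hr := gridPt_mem N j hj
  refine (binKL_le_chi q _ hq0 hq1 hr.1 hr.2).trans ?_
  have hr1 : 0 < 1 - gridPt N j := by linarith [hr.2]
  rw [div_le_iff₀ (mul_pos hr.1 hr1)]
  set b := (2 * (j:ℝ) + 1) * d with hb
  have hrb : gridPt N j = Real.sin b ^ 2 := rfl
  have hj' : (j:ℝ) + 1 ≤ N := by exact_mod_cast hj
  have hb1 : d ≤ b := by rw [hb]; nlinarith [(Nat.cast_nonneg j : (0:ℝ) ≤ j)]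
  have hb2 : b ≤ Real.pi / 2 - d := by rw [hb, e]; nlinarith
  have h1 := sin_add_le_aux (2 * b) (a - b) d hd0 hjt (by linarith) (by linarith)
  have h0 : 0 ≤ Real.sin (2 * b + (a - b)) :=
    Real.sin_nonneg_of_nonneg_of_le_pi (by linarith) (by linarith)
  rw [Real.sin_two_mul] at h1
  have hst : Real.sin (a - b) ^ 2 ≤ d ^ 2 := by
    rw [sq_le_sq, abs_of_pos hd0]
    exact Real.abs_sin_le_abs.trans hjt
  have hid : q - Real.sin b ^ 2 = Real.sin (a - b) * Real.sin (2 * b + (a - b)) := by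
    rw [show 2 * b + (a - b) = a + b by ring, Real.sin_sub, Real.sin_add, ← hsa]
    have := Real.sin_sq_add_cos_sq a
    have := Real.sin_sq_add_cos_sq b
    have e1 : Real.cos a ^ 2 = 1 - Real.sin a ^ 2 := by linarith
    have e2 : Real.cos b ^ 2 = 1 - Real.sin b ^ 2 := by linarith
    ring_nf
    rw [e1, e2]; ring
  rw [hrb, hid, show 1 - Real.sin b ^ 2 = Real.cos b ^ 2 by
    linarith [Real.sin_sq_add_cos_sq b], mul_pow]
  calc _ ≤ d ^ 2 * (3 / 2 * (2 * Real.sin b * Real.cos b)) ^ 2 :=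
        mul_le_mul hst (pow_le_pow_left₀ h0 h1 2) (by positivity) (by positivity)
    _ = _ := by ring

lemma binKL_split (q p r : ℝ) (hp0 : 0 < p) (hp1 : p < 1) (hr0 : 0 < r) (hr1 : r < 1) :
    binKL q p = binKL q r + (q * Real.log (r / p) + (1 - q) * Real.log ((1 - r) / (1 - p))) := by
  have key : ∀ x p r : ℝ, 0 < p → 0 < r →
      x * Real.log (x / p) = x * Real.log (x / r) + x * Real.log (r / p) := by
    intro x p r hp hr
    by_cases h : x = 0
    · simp [h]
    · rw [Real.log_div h hp.ne', Real.log_div h hr.ne', Real.log_div hr.ne' hp.ne']; ring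
  unfold binKL
  rw [key q p r hp0 hr0, key (1 - q) (1 - p) (1 - r) (by linarith) (by linarith)]
  ring

lemma geom_le_arith_aux (x A B : ℝ) (hx0 : 0 ≤ x) (hx1 : x ≤ 1) (hA : 0 < A) (hB : 0 < B) :
    Real.exp (x * Real.log A + (1 - x) * Real.log B) ≤ x * A + (1 - x) * B := by
  have := convexOn_exp.2 (Set.mem_univ (Real.log A)) (Set.mem_univ (Real.log B)) hx0
    (by linarith : 0 ≤ 1 - x) (by ring)
  simpa [Real.exp_log hA, Real.exp_log hB] using this

lemma exp_grid_const (m : ℕ) (hm : 0 < m) (N : ℕ) (hN : 3 * Real.sqrt m ≤ N) :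
    Real.exp (m * (9 * (Real.pi / (4 * N)) ^ 2)) ≤ 2 := by
  have hm' : (0:ℝ) < m := by exact_mod_cast hm
  have hs : 0 < Real.sqrt m := Real.sqrt_pos.2 hm'
  have hN' : (0:ℝ) < N := by linarith
  have hsq : 9 * (m:ℝ) ≤ N ^ 2 := by
    have := pow_le_pow_left₀ (by positivity) hN 2
    rw [mul_pow, Real.sq_sqrt hm'.le] at this
    linarith
  rw [← Real.le_log_iff_exp_le (by norm_num)]
  have : (m:ℝ) * (9 * (Real.pi / (4 * N)) ^ 2) ≤ Real.pi ^ 2 / 16 := by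
    rw [div_pow, mul_pow]
    rw [show (m:ℝ) * (9 * (Real.pi ^ 2 / (4 ^ 2 * (N:ℝ) ^ 2)))
      = (9 * m) * Real.pi ^ 2 / (16 * (N:ℝ) ^ 2) by field_simp; ring, div_le_div_iff₀ (by positivity)
      (by norm_num)]
    nlinarith [sq_nonneg Real.pi]
  have h2 := Real.log_two_gt_d9
  have h3 := Real.pi_lt_d2
  nlinarith [Real.pi_pos]

lemma maurer {Z : Type*} [MeasurableSpace Z] (m : ℕ) (hm : 0 < m)
    (D : Measure Z) [IsProbabilityMeasure D] (f : Z → ℝ) (hf : Measurable f)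
    (hf01 : ∀ z, f z ∈ Set.Icc (0:ℝ) 1) :
    ∫⁻ S : Fin m → Z, ENNReal.ofReal
        (Real.exp (m * binKL ((∑ i, f (S i)) / m) (∫ z, f z ∂D))) ∂(Measure.pi fun _ => D)
      ≤ ENNReal.ofReal (8 * Real.sqrt m) := by
  have hm' : (0:ℝ) < m := by exact_mod_cast hm
  have hm1 : (1:ℝ) ≤ m := by exact_mod_cast hm
  have hs1 : 1 ≤ Real.sqrt m := Real.one_le_sqrt.2 hm1
  have hfi : Integrable f D := by
    refine Integrable.of_bound hf.aestronglyMeasurable 1 (ae_of_all _ fun z => ?_)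
    rw [Real.norm_eq_abs, abs_of_nonneg (hf01 z).1]; exact (hf01 z).2
  set p := ∫ z, f z ∂D with hp
  have hp0 : 0 ≤ p := integral_nonneg fun z => (hf01 z).1
  have hp1 : p ≤ 1 := by
    have := integral_mono hfi (integrable_const 1) fun z => (hf01 z).2
    simpa using this
  have degen : ∀ c : ℝ, binKL c c = 0 → p = c → (∀ᵐ z ∂D, f z = c) →
      ∫⁻ S : Fin m → Z, ENNReal.ofReal
        (Real.exp (m * binKL ((∑ i, f (S i)) / m) p)) ∂(Measure.pi fun _ => D)
      ≤ ENNReal.ofReal (8 * Real.sqrt m) := by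
    intro c hc hpc hae
    have hall : ∀ᵐ S ∂(Measure.pi fun _ : Fin m => D), ∀ i, f (S i) = c :=
      ae_all_iff.2 fun i =>
        (measurePreserving_eval (fun _ : Fin m => D) i).quasiMeasurePreserving.ae hae
    have : ∀ᵐ S ∂(Measure.pi fun _ : Fin m => D), ENNReal.ofReal
        (Real.exp (m * binKL ((∑ i, f (S i)) / m) p)) = 1 := by
      filter_upwards [hall] with S hS
      have : (∑ i, f (S i)) / m = c := by
        simp [hS]; field_simp
      rw [this, hpc, hc]; simp
    rw [lintegral_congr_ae this]
    simp only [lintegral_const, measure_univ, mul_one]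
    rw [← ENNReal.ofReal_one]
    exact ENNReal.ofReal_le_ofReal (by linarith)
  rcases hp0.eq_or_lt with h0 | h0
  · refine degen 0 (by simp [binKL]) h0.symm ?_
    exact (integral_eq_zero_iff_of_nonneg (fun z => (hf01 z).1) hfi).1 h0.symm
  rcases hp1.eq_or_lt with h1 | h1
  · refine degen 1 (by simp [binKL]) h1 ?_
    have : ∫ z, (1 - f z) ∂D = 0 := by
      rw [integral_sub (integrable_const 1) hfi]; simp [← hp, h1]
    have := (integral_eq_zero_iff_of_nonneg (fun z => sub_nonneg.2 (hf01 z).2)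
      ((integrable_const 1).sub hfi)).1 this
    filter_upwards [this] with z hz
    simp at hz; linarith
  set N := ⌈3 * Real.sqrt m⌉₊ with hN
  have hN1 : 3 * Real.sqrt m ≤ N := Nat.le_ceil _
  have hN2 : (N:ℝ) < 3 * Real.sqrt m + 1 := Nat.ceil_lt_add_one (by positivity)
  have hN0 : 0 < N := Nat.ceil_pos.2 (by positivity)
  let g : ℕ → Z → ℝ := fun j z =>
    f z * (gridPt N j / p) + (1 - f z) * ((1 - gridPt N j) / (1 - p))
  have hgi : ∀ j, Integrable (g j) D := fun j =>
    (hfi.mul_const _).add (((integrable_const 1).sub hfi).mul_const _)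
  have hg0 : ∀ j < N, ∀ z, 0 ≤ g j z := by
    intro j hj z
    have := gridPt_mem N j hj
    exact add_nonneg (mul_nonneg (hf01 z).1 (div_nonneg this.1.le hp0))
      (mul_nonneg (by linarith [(hf01 z).2]) (div_nonneg (by linarith) (by linarith)))
  have hgint : ∀ j, ∫ z, g j z ∂D = 1 := by
    intro j
    have : 1 - p ≠ 0 := by linarith
    simp only [g]
    have hfi' : Integrable (fun z => 1 - f z) D := (integrable_const 1).sub hfi
    rw [integral_add (hfi.mul_const _) (hfi'.mul_const _),
      integral_mul_const, integral_mul_const, integral_sub (integrable_const 1) hfi, ← hp]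
    simp
    field_simp
    ring
  have hprod : ∀ j, ∫ S : Fin m → Z, ∏ i, g j (S i) ∂(Measure.pi fun _ => D) = 1 := by
    intro j
    rw [integral_fintype_prod_eq_prod (fun _ => g j)]
    simp [hgint]
  have hprodi : ∀ j, Integrable (fun S : Fin m → Z => ∏ i, g j (S i))
      (Measure.pi fun _ => D) := fun j => Integrable.fintype_prod fun _ => hgi j
  have hpt : ∀ S : Fin m → Z, Real.exp (m * binKL ((∑ i, f (S i)) / m) p) ≤
      ∑ j ∈ Finset.range N, 2 * ∏ i, g j (S i) := by
    intro S
    set q := (∑ i, f (S i)) / m with hq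
    have hmq : m * q = ∑ i, f (S i) := by rw [hq]; field_simp
    have hq0 : 0 ≤ q := div_nonneg (Finset.sum_nonneg fun i _ => (hf01 _).1) hm'.le
    have hq1 : q ≤ 1 := by
      rw [hq, div_le_one hm']
      calc ∑ i, f (S i) ≤ ∑ i : Fin m, (1:ℝ) := Finset.sum_le_sum fun i _ => (hf01 _).2
        _ = m := by simp
    obtain ⟨j, hj, hjb⟩ := exists_grid N hN0 q hq0 hq1
    have hr := gridPt_mem N j hj
    have hle : Real.exp (m * binKL q p) ≤ 2 * ∏ i, g j (S i) := by
      rw [binKL_split q p (gridPt N j) h0 h1 hr.1 hr.2, mul_add, Real.exp_add]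
      refine mul_le_mul ?_ ?_ (Real.exp_pos _).le (by norm_num)
      · exact (Real.exp_le_exp.2 (mul_le_mul_of_nonneg_left hjb hm'.le)).trans
          (exp_grid_const m hm N hN1)
      · have : m * (q * Real.log (gridPt N j / p)
            + (1 - q) * Real.log ((1 - gridPt N j) / (1 - p)))
            = ∑ i, (f (S i) * Real.log (gridPt N j / p)
            + (1 - f (S i)) * Real.log ((1 - gridPt N j) / (1 - p))) := by
          rw [Finset.sum_add_distrib, ← Finset.sum_mul, ← Finset.sum_mul, Finset.sum_sub_distrib,
            ← hmq]
          simp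
          ring
        rw [this, Real.exp_sum]
        refine Finset.prod_le_prod (fun i _ => (Real.exp_pos _).le) fun i _ => ?_
        exact geom_le_arith_aux _ _ _ (hf01 _).1 (hf01 _).2 (div_pos hr.1 h0)
          (div_pos (by linarith) (by linarith))
    refine hle.trans ?_
    refine Finset.single_le_sum (f := fun j => 2 * ∏ i, g j (S i)) (fun k hk => ?_)
      (Finset.mem_range.2 hj)
    exact mul_nonneg (by norm_num)
      (Finset.prod_nonneg fun i _ => hg0 k (Finset.mem_range.1 hk) _)
  calc _ ≤ ∫⁻ S : Fin m → Z, ENNReal.ofReal (∑ j ∈ Finset.range N, 2 * ∏ i, g j (S i))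
        ∂(Measure.pi fun _ => D) :=
        lintegral_mono fun S => ENNReal.ofReal_le_ofReal (hpt S)
    _ = ENNReal.ofReal (∫ S : Fin m → Z, ∑ j ∈ Finset.range N, 2 * ∏ i, g j (S i)
        ∂(Measure.pi fun _ => D)) := by
        rw [ofReal_integral_eq_lintegral_ofReal]
        · exact integrable_finsetSum _ fun j _ => (hprodi j).const_mul 2
        · exact ae_of_all _ fun S => (Real.exp_pos _).le.trans (hpt S)
    _ ≤ _ := by
        apply ENNReal.ofReal_le_ofReal
        rw [integral_finsetSum _ fun j _ => (hprodi j).const_mul 2]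
        simp only [integral_const_mul, hprod]
        simp
        linarith

lemma trueRisk_meas_aux {H Z : Type*} [MeasurableSpace Z] [MeasurableSpace H]
    (D : Measure Z) [IsProbabilityMeasure D] (ℓ : H → Z → ℝ)
    (hℓ : Measurable (Function.uncurry ℓ)) : Measurable (trueRisk D ℓ) :=
  (hℓ.stronglyMeasurable.integral_prod_right (ν := D)).measurable

lemma empRisk_meas_aux {H Z : Type*} [MeasurableSpace Z] [MeasurableSpace H] {m : ℕ}
    (ℓ : H → Z → ℝ) (hℓ : Measurable (Function.uncurry ℓ)) :
    Measurable (fun x : H × (Fin m → Z) => empRisk ℓ x.1 x.2) := by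
  unfold empRisk
  refine (Finset.measurable_sum _ fun i _ => ?_).div_const _
  exact hℓ.comp (measurable_fst.prodMk ((measurable_pi_apply i).comp measurable_snd))

lemma binKL_meas_aux : Measurable (fun x : ℝ × ℝ => binKL x.1 x.2) := by
  unfold binKL
  fun_prop

set_option maxHeartbeats 2000000 in
/-- **Practical bound with informed (Gibbs) prior.**  The prior `P` has density
proportional to `e^{−ω}`.  With probability at least `1−δ` over `S ∼ D^m`,
`h′ ∼ P` and `h ∼ Q_S` (Gibbs posterior for `μ`),
`kl(R_S^ℓ(h) ‖ R_D^ℓ(h)) ≤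
  (1/m)·[(μ(h′,S) − ω(h′)) − (μ(h,S) − ω(h)) + ln(8√m/δ²)]`. -/
theorem gibbs_complexity_kl_bound_gibbs_prior
    {Z H : Type*} [MeasurableSpace Z] [MeasurableSpace H]
    (m : ℕ) (hm : 0 < m)
    (D : Measure Z) [IsProbabilityMeasure D]
    (lam : Measure H) [SigmaFinite lam]
    (ℓ : H → Z → ℝ) (hℓ : Measurable (Function.uncurry ℓ))
    (hℓ01 : ∀ h z, ℓ h z ∈ Set.Icc (0:ℝ) 1)
    -- the informed (Gibbs) prior with density proportional to `e^{−ω}`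
    (ω : H → ℝ) (hω : Measurable ω)
    (hωint : Integrable (fun g => Real.exp (-(ω g))) lam)
    (hωpos : 0 < ∫ g, Real.exp (-(ω g)) ∂lam)
    (Pm : Measure H)
    (hPm : Pm = lam.withDensity fun h =>
      ENNReal.ofReal (Real.exp (-(ω h)) / ∫ g, Real.exp (-(ω g)) ∂lam))
    -- the Gibbs posterior for `μ`
    (μ : H → (Fin m → Z) → ℝ) (hμ : Measurable (Function.uncurry μ))
    (hμint : ∀ S, Integrable (fun g => Real.exp (-(μ g S))) lam)
    (hZpos : ∀ S : Fin m → Z, 0 < ∫ g, Real.exp (-(μ g S)) ∂lam)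
    (κ : Kernel (Fin m → Z) H) [IsMarkovKernel κ]
    (hκ : ∀ S, κ S = lam.withDensity fun h =>
      ENNReal.ofReal (Real.exp (-(μ h S)) / ∫ g, Real.exp (-(μ g S)) ∂lam))
    (δ : ℝ) (hδ : δ ∈ Set.Ioc (0:ℝ) 1) :
    1 - ENNReal.ofReal δ ≤
      (Pm.prod (Measure.pi (fun _ : Fin m => D) ⊗ₘ κ))
        {p : H × ((Fin m → Z) × H) |
          binKL (empRisk ℓ p.2.2 p.2.1) (trueRisk D ℓ p.2.2) ≤
            (1 / m) * ((μ p.1 p.2.1 - ω p.1) - (μ p.2.2 p.2.1 - ω p.2.2)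
              + Real.log (8 * Real.sqrt m / δ^2)) } := by
  obtain ⟨hδ0, hδ1⟩ := hδ
  have hm' : (0:ℝ) < m := by exact_mod_cast hm
  have hs : 0 < Real.sqrt m := Real.sqrt_pos.2 hm'
  set Zw := ∫ g, Real.exp (-(ω g)) ∂lam with hZw
  -- measurability
  have htr : Measurable (trueRisk D ℓ) := trueRisk_meas_aux D ℓ hℓ
  have hem : Measurable (fun x : H × (Fin m → Z) => empRisk ℓ x.1 x.2) := empRisk_meas_aux ℓ hℓ
  have hbk : Measurable (fun x : ℝ × ℝ => binKL x.1 x.2) := binKL_meas_aux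
  have hB : Measurable (fun x : H × (Fin m → Z) =>
      binKL (empRisk ℓ x.1 x.2) (trueRisk D ℓ x.1)) :=
    hbk.comp (hem.prodMk (htr.comp measurable_fst))
  let K : H → (Fin m → Z) → ℝ := fun h S =>
    Real.exp (m * binKL (empRisk ℓ h S) (trueRisk D ℓ h))
  have hK : Measurable (Function.uncurry K) := (hB.const_mul _).exp
  have hμ1 : Measurable (fun x : H × (Fin m → Z) => μ x.1 x.2) := hμ
  have hμS : ∀ S, Measurable (fun h => μ h S) := fun S =>
    hμ1.comp (measurable_id.prodMk measurable_const)
  have hKS : ∀ S, Measurable (fun h => K h S) := by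
    intro S
    have h1 : Measurable (fun h : H => (h, S)) := by fun_prop
    have h2 := hK.comp h1
    exact h2
  have hdω : Measurable (fun h => ENNReal.ofReal (Real.exp (-(ω h)) / Zw)) :=
    (hω.neg.exp.div_const Zw).ennreal_ofReal
  have hPprob : IsProbabilityMeasure Pm := by
    constructor
    rw [hPm, withDensity_apply _ MeasurableSet.univ, Measure.restrict_univ,
      ← ofReal_integral_eq_lintegral_ofReal (hωint.div_const _)
        (ae_of_all _ fun h => div_nonneg (Real.exp_pos _).le hωpos.le),
      integral_div, div_self hωpos.ne', ENNReal.ofReal_one]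
  let A : H → (Fin m → Z) → ℝ := fun h S => Real.exp (ω h - μ h S)
  let B : H → (Fin m → Z) → ℝ := fun h S => K h S * Real.exp (μ h S - ω h)
  have hA : Measurable (Function.uncurry A) :=
    ((hω.comp measurable_fst).sub hμ1).exp
  have hBm : Measurable (Function.uncurry B) :=
    hK.mul (hμ1.sub (hω.comp measurable_fst)).exp
  let F : H × ((Fin m → Z) × H) → ENNReal := fun p =>
    ENNReal.ofReal (A p.1 p.2.1) * ENNReal.ofReal (B p.2.2 p.2.1)
  have hF : Measurable F := by
    have h1 : Measurable (fun p : H × ((Fin m → Z) × H) => (p.1, p.2.1)) := by fun_prop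
    have h2 : Measurable (fun p : H × ((Fin m → Z) × H) => (p.2.2, p.2.1)) := by fun_prop
    have h3 : Measurable (fun p : H × ((Fin m → Z) × H) => A p.1 p.2.1) := by
      have h5 := hA.comp h1
      exact h5
    have h4 : Measurable (fun p : H × ((Fin m → Z) × H) => B p.2.2 p.2.1) := by
      have h5 := hBm.comp h2
      exact h5
    exact h3.ennreal_ofReal.mul h4.ennreal_ofReal
  have hAint : ∀ S, ∫⁻ h, ENNReal.ofReal (A h S) ∂Pm
      = ENNReal.ofReal ((∫ g, Real.exp (-(μ g S)) ∂lam) / Zw) := by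
    intro S
    have hAS : Measurable (fun h => ENNReal.ofReal (A h S)) :=
      ((hω.sub (hμS S)).exp).ennreal_ofReal
    rw [hPm, lintegral_withDensity_eq_lintegral_mul _ hdω hAS,
      ← integral_div, ofReal_integral_eq_lintegral_ofReal ((hμint S).div_const _)
        (ae_of_all _ fun h => div_nonneg (Real.exp_pos _).le hωpos.le)]
    refine lintegral_congr fun h => ?_
    simp only [Pi.mul_apply]
    rw [← ENNReal.ofReal_mul (div_nonneg (Real.exp_pos _).le hωpos.le)]
    simp only [A]
    rw [div_mul_eq_mul_div, ← Real.exp_add, neg_add_eq_sub, sub_sub_cancel_left]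
  have hBint : ∀ S, (∫⁻ h, ENNReal.ofReal (B h S) ∂(κ S))
        * ENNReal.ofReal ((∫ g, Real.exp (-(μ g S)) ∂lam) / Zw)
      = ∫⁻ h, ENNReal.ofReal (K h S) ∂Pm := by
    intro S
    have hZ := hZpos S
    have hBS : Measurable (fun h => ENNReal.ofReal (B h S)) :=
      ((hKS S).mul ((hμS S).sub hω).exp).ennreal_ofReal
    have hdμ : Measurable (fun h => ENNReal.ofReal
        (Real.exp (-(μ h S)) / ∫ g, Real.exp (-(μ g S)) ∂lam)) :=
      ((hμS S).neg.exp.div_const _).ennreal_ofReal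
    rw [hκ S, hPm, lintegral_withDensity_eq_lintegral_mul _ hdμ hBS,
      lintegral_withDensity_eq_lintegral_mul _ hdω (hKS S).ennreal_ofReal,
      ← lintegral_mul_const' _ _ ENNReal.ofReal_ne_top]
    refine lintegral_congr fun h => ?_
    simp only [Pi.mul_apply]
    have hBn : 0 ≤ B h S := mul_nonneg (Real.exp_pos _).le (Real.exp_pos _).le
    have hZn : 0 ≤ Real.exp (-(μ h S)) / ∫ g, Real.exp (-(μ g S)) ∂lam :=
      div_nonneg (Real.exp_pos _).le hZ.le
    rw [← ENNReal.ofReal_mul hZn, ← ENNReal.ofReal_mul (mul_nonneg hZn hBn),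
      ← ENNReal.ofReal_mul (div_nonneg (Real.exp_pos _).le hωpos.le)]
    congr 1
    have e : Real.exp (-(ω h)) = Real.exp (-(μ h S)) * Real.exp (μ h S - ω h) := by
      rw [← Real.exp_add]; congr 1; ring
    simp only [B]
    rw [e]
    have := hZ.ne'
    have := hωpos.ne'
    field_simp
  have hmaurer : ∀ h, ∫⁻ S, ENNReal.ofReal (K h S) ∂(Measure.pi fun _ : Fin m => D)
      ≤ ENNReal.ofReal (8 * Real.sqrt m) := by
    intro h
    have hmeas : Measurable (ℓ h) := hℓ.comp (measurable_const.prodMk measurable_id)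
    have := maurer m hm D (ℓ h) hmeas (hℓ01 h)
    simp only [K, empRisk, trueRisk]
    exact this
  have hint : ∫⁻ p, F p ∂(Pm.prod (Measure.pi (fun _ : Fin m => D) ⊗ₘ κ))
      ≤ ENNReal.ofReal (8 * Real.sqrt m) := by
    rw [lintegral_prod_symm' _ hF, Measure.lintegral_compProd hF.lintegral_prod_left']
    have e1 : ∀ S, ∫⁻ h, ∫⁻ h', F (h', (S, h)) ∂Pm ∂(κ S)
        = ∫⁻ h, ENNReal.ofReal (K h S) ∂Pm := by
      intro S
      rw [← hBint S, ← lintegral_mul_const' _ _ ENNReal.ofReal_ne_top]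
      refine lintegral_congr fun h => ?_
      simp only [F]
      rw [lintegral_mul_const' _ _ ENNReal.ofReal_ne_top, hAint, mul_comm]
    simp only [e1]
    rw [lintegral_lintegral_swap (f := fun S h => ENNReal.ofReal (K h S))
      ((hK.comp measurable_swap).ennreal_ofReal.aemeasurable)]
    calc _ ≤ ∫⁻ _, ENNReal.ofReal (8 * Real.sqrt m) ∂Pm := by
          exact lintegral_mono hmaurer
      _ = _ := by simp
  -- conclusion by Markov's inequality
  set E := {p : H × ((Fin m → Z) × H) |
          binKL (empRisk ℓ p.2.2 p.2.1) (trueRisk D ℓ p.2.2) ≤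
            (1 / m) * ((μ p.1 p.2.1 - ω p.1) - (μ p.2.2 p.2.1 - ω p.2.2)
              + Real.log (8 * Real.sqrt m / δ^2)) } with hE
  set P := Pm.prod (Measure.pi (fun _ : Fin m => D) ⊗ₘ κ) with hP
  set c := 8 * Real.sqrt m / δ ^ 2 with hc
  have hc0 : 0 < c := by positivity
  have hsub : Eᶜ ⊆ {p | ENNReal.ofReal c ≤ F p} := by
    intro p hp
    simp only [hE, Set.mem_compl_iff, Set.mem_ofPred_eq, not_le] at hp
    rw [one_div, inv_mul_lt_iff₀ hm'] at hp
    simp only [Set.mem_ofPred_eq, F, A, B, K]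
    rw [← ENNReal.ofReal_mul (Real.exp_pos _).le, ← Real.exp_add, ← Real.exp_add]
    apply ENNReal.ofReal_le_ofReal
    rw [← Real.log_le_iff_le_exp hc0]
    linarith
  have hmk : ENNReal.ofReal c * P Eᶜ ≤ ENNReal.ofReal (8 * Real.sqrt m) :=
    (mul_le_mul_right (measure_mono hsub) _).trans
      ((mul_meas_ge_le_lintegral hF _).trans hint)
  have hcompl : P Eᶜ ≤ ENNReal.ofReal δ := by
    have h1 : P Eᶜ ≤ ENNReal.ofReal (8 * Real.sqrt m) / ENNReal.ofReal c := by
      rw [ENNReal.le_div_iff_mul_le (Or.inl (by simpa using hc0)) (Or.inl ENNReal.ofReal_ne_top),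
        mul_comm]
      exact hmk
    refine h1.trans ?_
    rw [← ENNReal.ofReal_div_of_pos hc0]
    apply ENNReal.ofReal_le_ofReal
    rw [hc, div_div_eq_mul_div, mul_div_cancel_left₀ _ (by positivity)]
    nlinarith
  have htot : 1 ≤ P E + P Eᶜ := by
    have h := measure_union_le (μ := P) E Eᶜ
    rwa [Set.union_compl_self, measure_univ] at h
  rw [tsub_le_iff_right]
  exact htot.trans (add_le_add le_rfl hcompl)
end

section
/- Catoni bound for a general Gibbs posterior: For any probability measure D on Z, any loss ℓ : H × Z → [0,1], any prior density P on H, any measurable parametric function μ : H × Z^m → ℝ with finite positive Gibbs normalizer, any fixed c > 0, and any δ ∈ (0,1], with probability at least 1−δ over S ∼ D^m and h ∼ Q_S (Gibbs posterior for μ) one has R_D^ℓ(h) ≤ (1/(1−e^{−c}))·{ 1 − exp( −c·R_S^ℓ(h) − (1/m)·[ −μ(h,S) − ln P(h) − ln( E_{g∼P} (1/P(g))·e^{−μ(g,S)} ) + ln(1/δ) ] ) }. -/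
open MeasureTheory ProbabilityTheory

lemma catoni_exp_le {c x : ℝ} (hx : x ∈ Set.Icc (0:ℝ) 1) :
    Real.exp (-c * x) ≤ 1 - (1 - Real.exp (-c)) * x := by
  have h := convexOn_exp.2 (Set.mem_univ (-c)) (Set.mem_univ 0) hx.1
    (sub_nonneg.2 hx.2) (by ring)
  simp only [smul_eq_mul, mul_zero, add_zero, Real.exp_zero, mul_one] at h
  rw [mul_comm] at h
  linarith

lemma catoni_B_pos {Z H : Type*} [MeasurableSpace Z]
    (D : Measure Z) [IsProbabilityMeasure D]
    (ℓ : H → Z → ℝ) (hℓ01 : ∀ h z, ℓ h z ∈ Set.Icc (0:ℝ) 1)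
    (hℓh : ∀ h, Measurable (ℓ h)) (c : ℝ) (hc : 0 < c) (h : H) :
    0 < 1 - (1 - Real.exp (-c)) * trueRisk D ℓ h := by
  have hint : Integrable (ℓ h) D := Integrable.of_mem_Icc 0 1 (hℓh h).aemeasurable
    (ae_of_all _ (hℓ01 h))
  have h1 : trueRisk D ℓ h ≤ 1 := by
    have := integral_mono hint (integrable_const (1:ℝ)) (fun z => (hℓ01 h z).2)
    simpa [trueRisk] using this
  have h0 : 0 ≤ trueRisk D ℓ h := integral_nonneg (fun z => (hℓ01 h z).1)
  have he := Real.exp_pos (-c)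
  have he1 : Real.exp (-c) < 1 := Real.exp_zero ▸ Real.exp_lt_exp.2 (by linarith)
  nlinarith

lemma catoni_laplace {Z H : Type*} [MeasurableSpace Z] {m : ℕ}
    (D : Measure Z) [IsProbabilityMeasure D]
    (ℓ : H → Z → ℝ) (hℓ01 : ∀ h z, ℓ h z ∈ Set.Icc (0:ℝ) 1)
    (hℓh : ∀ h, Measurable (ℓ h)) (c : ℝ) (hc : 0 < c) (h : H) :
    ∫⁻ S, ENNReal.ofReal (∏ i, (Real.exp (-c * ℓ h (S i)) /
        (1 - (1 - Real.exp (-c)) * trueRisk D ℓ h)))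
      ∂(Measure.pi (fun _ : Fin m => D)) ≤ 1 := by
  have hB := catoni_B_pos D ℓ hℓ01 hℓh c hc h
  set B := 1 - (1 - Real.exp (-c)) * trueRisk D ℓ h with hBdef
  have hint : Integrable (ℓ h) D := Integrable.of_mem_Icc 0 1 (hℓh h).aemeasurable
    (ae_of_all _ (hℓ01 h))
  have hexp : Integrable (fun z => Real.exp (-c * ℓ h z)) D := by
    refine Integrable.of_mem_Icc 0 1
      (Real.measurable_exp.comp ((hℓh h).const_mul (-c))).aemeasurable
      (ae_of_all _ fun z => ⟨(Real.exp_pos _).le, Real.exp_le_one_iff.2 ?_⟩)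
    have := mul_nonneg hc.le (hℓ01 h z).1
    linarith
  have hle : ∫ z, Real.exp (-c * ℓ h z) / B ∂D ≤ 1 := by
    rw [integral_div, div_le_one hB]
    have := integral_mono hexp ((integrable_const (1:ℝ)).sub (hint.const_mul (1 - Real.exp (-c))))
      (fun z => catoni_exp_le (hℓ01 h z))
    refine this.trans (le_of_eq ?_)
    simp only [Pi.sub_apply]
    rw [integral_sub (integrable_const _) (hint.const_mul _), integral_const_mul]
    simp [hBdef, trueRisk]
  have hnn : ∀ z, 0 ≤ Real.exp (-c * ℓ h z) / B := fun z => by positivity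
  rw [← ofReal_integral_eq_lintegral_ofReal]
  · rw [integral_fintype_prod_eq_prod (fun _ : Fin m => fun z => Real.exp (-c * ℓ h z) / B)]
    rw [ENNReal.ofReal_le_one]
    exact Finset.prod_le_one (fun _ _ => integral_nonneg hnn) (fun _ _ => hle)
  · exact Integrable.fintype_prod (f := fun _ : Fin m => fun z => Real.exp (-c * ℓ h z) / B)
      (fun _ => hexp.div_const B)
  · exact ae_of_all _ fun S => Finset.prod_nonneg fun i _ => hnn _

/-- **Catoni bound for a general Gibbs posterior.**  For any fixed `c > 0`,
with probability at least `1−δ` over `S ∼ D^m` and `h ∼ Q_S` (Gibbs posterior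
for `μ`),
`R_D^ℓ(h) ≤ (1/(1−e^{−c}))·{1 − exp(−c·R_S^ℓ(h) − (1/m)·[−μ(h,S) − ln P(h)
  − ln(E_{g∼P} (1/P(g))·e^{−μ(g,S)}) + ln(1/δ)])}`. -/
theorem catoni_gibbs_posterior_bound
    {Z H : Type*} [MeasurableSpace Z] [MeasurableSpace H]
    (m : ℕ) (hm : 0 < m)
    (D : Measure Z) [IsProbabilityMeasure D]
    (lam : Measure H) [SigmaFinite lam]
    (ℓ : H → Z → ℝ) (hℓ : Measurable (Function.uncurry ℓ))
    (hℓ01 : ∀ h z, ℓ h z ∈ Set.Icc (0:ℝ) 1)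
    (P : H → ℝ) (hPpos : ∀ h, 0 < P h) (hPmeas : Measurable P)
    (Pm : Measure H) [IsProbabilityMeasure Pm]
    (hPm : Pm = lam.withDensity fun h => ENNReal.ofReal (P h))
    (μ : H → (Fin m → Z) → ℝ) (hμ : Measurable (Function.uncurry μ))
    (hμint : ∀ S, Integrable (fun g => Real.exp (-(μ g S))) lam)
    (hZpos : ∀ S : Fin m → Z, 0 < ∫ g, Real.exp (-(μ g S)) ∂lam)
    (κ : Kernel (Fin m → Z) H) [IsMarkovKernel κ]
    (hκ : ∀ S, κ S = lam.withDensity fun h =>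
      ENNReal.ofReal (Real.exp (-(μ h S)) / ∫ g, Real.exp (-(μ g S)) ∂lam))
    (c : ℝ) (hc : 0 < c)
    (δ : ℝ) (hδ : δ ∈ Set.Ioc (0:ℝ) 1) :
    1 - ENNReal.ofReal δ ≤
      (Measure.pi (fun _ : Fin m => D) ⊗ₘ κ)
        {p : (Fin m → Z) × H |
          trueRisk D ℓ p.2 ≤
            (1 / (1 - Real.exp (-c))) *
              (1 - Real.exp (-c * empRisk ℓ p.2 p.1
                - (1/m) * (-(μ p.2 p.1) - Real.log (P p.2)
                  - Real.log (∫ g, (1 / P g) * Real.exp (-(μ g p.1)) ∂Pm)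
                  + Real.log (1/δ)))) } := by
  have hℓh : ∀ h, Measurable (ℓ h) := fun h => hℓ.comp measurable_prodMk_left
  have hBpos := catoni_B_pos D ℓ hℓ01 hℓh c hc
  have hlap := fun h => catoni_laplace (m := m) D ℓ hℓ01 hℓh c hc h
  -- the normalizer
  have hnorm : ∀ S, ∫ g, (1 / P g) * Real.exp (-(μ g S)) ∂Pm = ∫ g, Real.exp (-(μ g S)) ∂lam := by
    intro S
    rw [hPm, integral_withDensity_eq_integral_toReal_smul hPmeas.ennreal_ofReal
      (ae_of_all _ fun _ => ENNReal.ofReal_lt_top)]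
    refine integral_congr_ae (ae_of_all _ fun g => ?_)
    have := hPpos g
    simp only [ENNReal.toReal_ofReal this.le, smul_eq_mul]
    field_simp
  simp_rw [hnorm]
  set N : (Fin m → Z) → ℝ := fun S => ∫ g, Real.exp (-(μ g S)) ∂lam with hN
  have hNpos : ∀ S, 0 < N S := hZpos
  have hNmeas : Measurable N := by
    have h1 : StronglyMeasurable (Function.uncurry fun g S => Real.exp (-(μ g S))) :=
      (Real.measurable_exp.comp hμ.neg).stronglyMeasurable
    exact h1.integral_prod_left.measurable
  have hRmeas : Measurable (trueRisk D ℓ) :=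
    (hℓ.stronglyMeasurable.integral_prod_right (ν := D)).measurable
  set B : H → ℝ := fun h => 1 - (1 - Real.exp (-c)) * trueRisk D ℓ h with hB
  have hBpos : ∀ h, 0 < B h := hBpos
  have hBmeas : Measurable B := measurable_const.sub (hRmeas.const_mul _)
  set W : (Fin m → Z) × H → ℝ := fun p => ∏ i, (Real.exp (-c * ℓ p.2 (p.1 i)) / B p.2) with hW
  have hWpos : ∀ p, 0 < W p := fun p =>
    Finset.prod_pos fun i _ => div_pos (Real.exp_pos _) (hBpos _)
  have hWmeas : Measurable W := by
    refine Finset.measurable_prod _ fun i _ => ?_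
    refine Measurable.div (Real.measurable_exp.comp (Measurable.const_mul ?_ _))
      (hBmeas.comp measurable_snd)
    exact hℓ.comp (measurable_snd.prodMk ((measurable_pi_apply i).comp measurable_fst))
  have hμ' : Measurable (fun p : (Fin m → Z) × H => μ p.2 p.1) := hμ.comp measurable_swap
  set F : (Fin m → Z) × H → ℝ := fun p => W p * (P p.2 * N p.1 * Real.exp (μ p.2 p.1)) with hF
  have hFmeas : Measurable F := hWmeas.mul
    (((hPmeas.comp measurable_snd).mul (hNmeas.comp measurable_fst)).mul
      (Real.measurable_exp.comp hμ'))
  have hF1 : ∫⁻ p, ENNReal.ofReal (F p) ∂(Measure.pi (fun _ : Fin m => D) ⊗ₘ κ) ≤ 1 := by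
    rw [Measure.lintegral_compProd hFmeas.ennreal_ofReal]
    have hS : ∀ S, ∫⁻ h, ENNReal.ofReal (F (S, h)) ∂(κ S)
        = ∫⁻ h, ENNReal.ofReal (W (S, h)) ∂Pm := by
      intro S
      have hm1 : Measurable fun h => ENNReal.ofReal (Real.exp (-(μ h S)) / N S) :=
        ((Real.measurable_exp.comp (hμ'.comp measurable_prodMk_left).neg).div_const _).ennreal_ofReal
      have hm2 : Measurable fun h => ENNReal.ofReal (F (S, h)) :=
        (hFmeas.comp measurable_prodMk_left).ennreal_ofReal
      have hm3 : Measurable fun h => ENNReal.ofReal (W (S, h)) :=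
        (hWmeas.comp measurable_prodMk_left).ennreal_ofReal
      have hκ' : κ S = lam.withDensity fun h => ENNReal.ofReal (Real.exp (-(μ h S)) / N S) := hκ S
      rw [hκ', hPm, lintegral_withDensity_eq_lintegral_mul _ hm1 hm2,
        lintegral_withDensity_eq_lintegral_mul _ hPmeas.ennreal_ofReal hm3]
      refine lintegral_congr fun h => ?_
      have hp := hPpos h
      have hn := hNpos S
      simp only [Pi.mul_apply]
      rw [← ENNReal.ofReal_mul (div_nonneg (Real.exp_pos _).le hn.le), ← ENNReal.ofReal_mul hp.le]
      congr 1
      simp only [hF]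
      rw [Real.exp_neg]
      have := Real.exp_pos (μ h S)
      field_simp
    simp_rw [hS]
    rw [lintegral_lintegral_swap hWmeas.ennreal_ofReal.aemeasurable]
    calc _ ≤ ∫⁻ _, 1 ∂Pm := lintegral_mono hlap
      _ = 1 := by simp
  -- Markov
  set A := {p : (Fin m → Z) × H |
          trueRisk D ℓ p.2 ≤
            (1 / (1 - Real.exp (-c))) *
              (1 - Real.exp (-c * empRisk ℓ p.2 p.1
                - (1/m) * (-(μ p.2 p.1) - Real.log (P p.2)
                  - Real.log (N p.1)
                  + Real.log (1/δ)))) } with hA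
  set ρ := (Measure.pi (fun _ : Fin m => D) ⊗ₘ κ) with hρ
  have hsub : Aᶜ ⊆ {p | 1 ≤ ENNReal.ofReal δ * ENNReal.ofReal (F p)} := by
    rintro ⟨S, h⟩ hp
    simp only [hA, Set.mem_compl_iff, Set.mem_ofPred_eq, not_le] at hp
    have he1 : Real.exp (-c) < 1 := Real.exp_zero ▸ Real.exp_lt_exp.2 (by linarith)
    rw [one_div, inv_mul_lt_iff₀ (by linarith)] at hp
    have hlt : B h < Real.exp (-c * empRisk ℓ h S
                - (1/m) * (-(μ h S) - Real.log (P h) - Real.log (N S) + Real.log (1/δ))) := by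
      simp only [hB]; linarith
    have hpow := pow_lt_pow_left₀ hlt (hBpos h).le hm.ne'
    rw [← Real.exp_nat_mul] at hpow
    have hm' : (0:ℝ) < m := by exact_mod_cast hm
    have hexpo : (m:ℝ) * (-c * empRisk ℓ h S
                - (1/m) * (-(μ h S) - Real.log (P h) - Real.log (N S) + Real.log (1/δ)))
        = (∑ i, -c * ℓ h (S i)) + (μ h S + Real.log (P h) + Real.log (N S) + Real.log δ) := by
      rw [← Finset.mul_sum, one_div δ, Real.log_inv, empRisk]
      field_simp
      ring
    rw [hexpo, Real.exp_add, Real.exp_sum, Real.exp_add, Real.exp_add, Real.exp_add,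
      Real.exp_log (hPpos h), Real.exp_log (hNpos S), Real.exp_log hδ.1] at hpow
    have hFeq : F (S, h) = (∏ i, Real.exp (-c * ℓ h (S i))) / B h ^ m
        * (P h * N S * Real.exp (μ h S)) := by
      simp [hF, hW, Finset.prod_div_distrib]
    simp only [Set.mem_ofPred_eq]
    rw [← ENNReal.ofReal_mul hδ.1.le, ENNReal.one_le_ofReal, hFeq]
    have hBm : 0 < B h ^ m := pow_pos (hBpos h) m
    have : δ * ((∏ i, Real.exp (-c * ℓ h (S i))) / B h ^ m * (P h * N S * Real.exp (μ h S)))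
      = ((∏ i, Real.exp (-c * ℓ h (S i))) * (Real.exp (μ h S) * P h * N S * δ)) / B h ^ m := by
      ring
    rw [this, le_div_iff₀ hBm, one_mul]
    exact hpow.le
  have hmk : ρ Aᶜ ≤ ENNReal.ofReal δ := by
    have h1 := mul_meas_ge_le_lintegral (μ := ρ) (hFmeas.ennreal_ofReal.const_mul (ENNReal.ofReal δ)) 1
    rw [one_mul, lintegral_const_mul _ hFmeas.ennreal_ofReal] at h1
    calc ρ Aᶜ ≤ _ := measure_mono hsub
      _ ≤ _ := h1
      _ ≤ ENNReal.ofReal δ * 1 := by gcongr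
      _ = _ := mul_one _
  have huniv : (1 : ENNReal) ≤ ρ A + ρ Aᶜ := by
    have : ρ Set.univ = 1 := measure_univ
    rw [← this, ← Set.union_compl_self A]
    exact measure_union_le _ _
  rw [tsub_le_iff_right]
  exact huniv.trans (by gcongr)
end
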